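/- Let (A_α) be a family of nonnegative reals indexed by multi-indices α with |α| ≥ 1, defined by prescribing positive values A_{ε_i} for the unit multi-indices ε_i and by the recursion A_α = ∑_{0 < β < α} A_β · A_{α−β} for |α| > 1 (sum over multi-indices β with 0 < |β| and β < α componentwise, β ≠ α). Then for every α with |α| ≥ 1, A_α = C_{|α|−1} · (|α|!/α!) · ∏_i A_{ε_i}^{α_i}, where C_n is the n-th Catalan number. -/

import Mathlib

open Finsupp

/-! Write `F = ∑ A_α x ^ α` and `L = ∑ A_{ε_i} x_i` as formal power series. The recursion says that
`F = L + F ^ 2`, whose solution without constant term is `F = ∑ C_n L ^ (n + 1)`, and the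
multinomial theorem reads off its coefficients. Comparing the coefficients of `x ^ α` involves only
the finitely many variables in the support of `α`, so polynomials suffice. -/

open Finset hiding antidiagonal mem_antidiagonal
open Finset.HasAntidiagonal

section UniqueSolution

variable {M R : Type*} [AddCommMonoid M] [PartialOrder M] [IsOrderedCancelAddMonoid M]
  [CanonicallyOrderedAdd M] [Sub M] [OrderedSub M] [LocallyFiniteOrder M]
  [NonUnitalNonAssocSemiring R]

theorem sum_Ioo_mul_tsub_eq_sum_antidiagonal [HasAntidiagonal M] {f g : M → R} (hf : f 0 = 0)
    (hg : g 0 = 0) (a : M) :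
    ∑ b ∈ Ioo 0 a, f b * g (a - b) = ∑ p ∈ antidiagonal a, f p.1 * g p.2 := by
  refine sum_of_injOn (fun b ↦ (b, a - b)) (fun b _ c _ h ↦ congrArg Prod.fst h) ?_ ?_
    fun _ _ ↦ rfl
  · intro b hb
    simpa using add_tsub_cancel_of_le (mem_Ioo.1 hb).2.le
  · rintro ⟨b, c⟩ hbc hnot
    obtain rfl := mem_antidiagonal.1 hbc
    rcases eq_or_ne b 0 with rfl | hb
    · simp [hf]
    rcases eq_or_ne c 0 with rfl | hc
    · simp [hg]
    have hmem : b ∈ Ioo 0 (b + c) :=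
      mem_Ioo.2 ⟨pos_iff_ne_zero.2 hb, lt_add_of_pos_right b (pos_iff_ne_zero.2 hc)⟩
    exact absurd ⟨b, hmem, by simp⟩ hnot

theorem eq_of_eq_sum_Ioo_mul_tsub [WellFoundedLT M] {A B : M → R} {P : M → Prop}
    (hA : ∀ a, P a → A a = ∑ b ∈ Ioo 0 a, A b * A (a - b))
    (hB : ∀ a, P a → B a = ∑ b ∈ Ioo 0 a, B b * B (a - b))
    (hAB : ∀ a ≠ 0, ¬P a → A a = B a) {a : M} (ha : a ≠ 0) : A a = B a := by
  induction a using WellFoundedLT.induction with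
  | ind a ih =>
    by_cases hPa : P a
    · rw [hA a hPa, hB a hPa]
      refine sum_congr rfl fun b hb ↦ ?_
      obtain ⟨hb0, hba⟩ := mem_Ioo.1 hb
      have hsub : a - b < a := (tsub_lt_iff_right hba.le).2 (lt_add_of_pos_right a hb0)
      rw [ih b hba hb0.ne', ih (a - b) hsub (tsub_pos_of_lt hba).ne']
    · exact hAB a ha hPa

end UniqueSolution

section Catalan

/-- The coefficients `0, C_0, C_1, C_2, …` of the solution `f = ∑ C_n t ^ (n + 1)` of
`f = t + f ^ 2`. The leading `0` makes the Catalan recursion a full convolution. -/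
def shiftedCatalan : ℕ → ℕ
  | 0 => 0
  | n + 1 => catalan n

@[simp]
theorem shiftedCatalan_zero : shiftedCatalan 0 = 0 := rfl

@[simp]
theorem shiftedCatalan_succ (n : ℕ) : shiftedCatalan (n + 1) = catalan n := rfl

theorem shiftedCatalan_of_ne_zero {n : ℕ} (hn : n ≠ 0) : shiftedCatalan n = catalan (n - 1) := by
  rw [← shiftedCatalan_succ, Nat.sub_one_add_one hn]

theorem sum_antidiagonal_shiftedCatalan {n : ℕ} (hn : 1 < n) :
    ∑ p ∈ antidiagonal n, shiftedCatalan p.1 * shiftedCatalan p.2 = shiftedCatalan n := by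
  obtain ⟨m, rfl⟩ := Nat.exists_eq_add_of_le' hn
  simp [Finset.Nat.antidiagonal_succ_succ', catalan_succ']

end Catalan

section Multinomial

variable {ι R : Type*}

theorem cast_multinomial_eq_div [Semifield R] [CharZero R] (α : ι →₀ ℕ) :
    (α.multinomial : R) = α.degree.factorial / α.prod fun _ n ↦ (n.factorial : R) := by
  have h : (α.prod fun _ n ↦ (n.factorial : R)) ≠ 0 :=
    Finset.prod_ne_zero_iff.2 fun i _ ↦ Nat.cast_ne_zero.2 (α i).factorial_ne_zero
  rw [eq_div_iff h, mul_comm]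
  exact_mod_cast Nat.multinomial_spec α.support α

variable [DecidableEq ι]

theorem sum_antidiagonal_multinomial_mul_multinomial {α : ι →₀ ℕ} {q : ℕ × ℕ}
    (hq : q ∈ antidiagonal α.degree) :
    ∑ p ∈ antidiagonal α with (p.1.degree, p.2.degree) = q,
      p.1.multinomial * p.2.multinomial = α.multinomial := by
  -- Compare the coefficients of `x ^ α` in `L ^ q.1 * L ^ q.2 = L ^ (q.1 + q.2)`, where `L` is the
  -- sum of the variables in the support of `α`.
  let e : ι →₀ ℕ := indicator α.support fun _ _ ↦ 1
  let L : MvPolynomial ι ℕ := e.linearCombination ℕ MvPolynomial.X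
  have coeff_L_pow {β : ι →₀ ℕ} (hβ : β ≤ α) (n : ℕ) :
      (L ^ n).coeff β = if β.degree = n then β.multinomial else 0 := by
    have prod_e : (β.prod fun i m ↦ e i ^ m) = 1 := Finset.prod_eq_one fun i hi ↦ by
      simp only [e, indicator_of_mem (support_mono hβ hi), one_pow]
    rw [MvPolynomial.coeff_linearCombination_X_pow, prod_e, Nat.cast_id, mul_one]
    rfl
  have hcoeff := MvPolynomial.coeff_mul (L ^ q.1) (L ^ q.2) α
  rw [← pow_add, mem_antidiagonal.1 hq, coeff_L_pow le_rfl, if_pos rfl] at hcoeff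
  rw [hcoeff, sum_filter]
  refine sum_congr rfl fun p hp ↦ ?_
  simp only [coeff_L_pow (antidiagonal.fst_le hp), coeff_L_pow (antidiagonal.snd_le hp),
    ite_zero_mul_ite_zero, Prod.ext_iff]

theorem sum_antidiagonal_mul_multinomial [CommSemiring R] (c d : ℕ → R) (α : ι →₀ ℕ) :
    ∑ p ∈ antidiagonal α,
        (c p.1.degree * p.1.multinomial) * (d p.2.degree * p.2.multinomial) =
      (∑ q ∈ antidiagonal α.degree, c q.1 * d q.2) * α.multinomial := by
  have degree_mem (p) (hp : p ∈ antidiagonal α) :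
      (p.1.degree, p.2.degree) ∈ antidiagonal α.degree := by
    rw [mem_antidiagonal, ← map_add, mem_antidiagonal.1 hp]
  rw [← sum_fiberwise_of_maps_to degree_mem, Finset.sum_mul]
  refine sum_congr rfl fun q hq ↦ ?_
  rw [← sum_antidiagonal_multinomial_mul_multinomial hq, Nat.cast_sum, Finset.mul_sum]
  refine sum_congr rfl fun p hp ↦ ?_
  obtain rfl := (mem_filter.1 hp).2
  push_cast
  ring

end Multinomial

section CatalanCoeff

variable {ι R : Type*} [CommSemiring R]

/-- The coefficient of `x ^ α` in the solution `F = ∑ C_n L ^ (n + 1)` of `F = L + F ^ 2`, where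
`L = ∑ a i * x i`. -/
noncomputable def catalanCoeff (a : ι → R) (α : ι →₀ ℕ) : R :=
  shiftedCatalan α.degree * α.multinomial * α.prod fun i n ↦ a i ^ n

theorem catalanCoeff_zero (a : ι → R) : catalanCoeff a 0 = 0 := by
  simp [catalanCoeff]

theorem catalanCoeff_single (a : ι → R) (i : ι) : catalanCoeff a (single i 1) = a i := by
  simp [catalanCoeff, multinomial_eq_of_support_subset support_single_subset]

theorem catalanCoeff_of_ne_zero (a : ι → R) {α : ι →₀ ℕ} (hα : α ≠ 0) :
    catalanCoeff a α =
      catalan (α.degree - 1) * α.multinomial * α.prod fun i n ↦ a i ^ n := by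
  rw [catalanCoeff, shiftedCatalan_of_ne_zero ((degree_eq_zero_iff α).not.2 hα)]

variable [DecidableEq ι]

theorem sum_Ioo_catalanCoeff (a : ι → R) {α : ι →₀ ℕ} (hα : 1 < α.degree) :
    ∑ β ∈ Ioo 0 α, catalanCoeff a β * catalanCoeff a (α - β) = catalanCoeff a α := by
  let c (n : ℕ) : R := shiftedCatalan n
  calc
    _ = ∑ p ∈ antidiagonal α, catalanCoeff a p.1 * catalanCoeff a p.2 :=
      sum_Ioo_mul_tsub_eq_sum_antidiagonal (catalanCoeff_zero a) (catalanCoeff_zero a) α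
    _ = (∑ p ∈ antidiagonal α,
          (c p.1.degree * p.1.multinomial) * (c p.2.degree * p.2.multinomial)) *
        α.prod fun i n ↦ a i ^ n := by
      rw [Finset.sum_mul]
      refine sum_congr rfl fun p hp ↦ ?_
      rw [← mem_antidiagonal.1 hp, prod_add_index' (by simp) (by simp [pow_add])]
      simp only [catalanCoeff, c]
      ring
    _ = catalanCoeff a α := by
      rw [sum_antidiagonal_mul_multinomial, catalanCoeff,
        ← sum_antidiagonal_shiftedCatalan hα]
      push_cast
      rfl

theorem stmt5_general (A : (ι →₀ ℕ) → R)
    (hrec : ∀ α : ι →₀ ℕ, 1 < α.degree → A α = ∑ β ∈ Ioo 0 α, A β * A (α - β))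
    {α : ι →₀ ℕ} (hα : α ≠ 0) :
    A α = catalan (α.degree - 1) * α.multinomial * α.prod fun i n ↦ A (single i 1) ^ n := by
  rw [← catalanCoeff_of_ne_zero _ hα]
  refine eq_of_eq_sum_Ioo_mul_tsub hrec (fun β hβ ↦ (sum_Ioo_catalanCoeff _ hβ).symm) ?_ hα
  intro β hβ0 hβ
  have hdeg : β.degree = 1 :=
    (not_lt.1 hβ).antisymm (Nat.one_le_iff_ne_zero.2 ((degree_eq_zero_iff β).not.2 hβ0))
  obtain ⟨i, rfl⟩ := (Finsupp.sum_eq_one_iff β).1 hdeg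
  rw [catalanCoeff_single]

end CatalanCoeff

/-- Closed form for the multi-index Catalan recursion:
    A_α = C_{|α|-1} (|α|!/α!) ∏_i A_{ε_i}^{α_i}. -/
theorem stmt5 (A : (ℕ →₀ ℕ) → ℝ)
    (hpos : ∀ i, 0 < A (Finsupp.single i 1))
    (hrec : ∀ α : ℕ →₀ ℕ, 1 < (α.sum fun _ n => n) →
      A α = ∑ β ∈ Finset.Ioo (0 : ℕ →₀ ℕ) α, A β * A (α - β)) :
    ∀ α : ℕ →₀ ℕ, α ≠ 0 →
      A α = (catalan ((α.sum fun _ n => n) - 1) : ℝ) *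
        (((α.sum fun _ n => n).factorial : ℝ) /
          (α.prod fun _ n => (n.factorial : ℝ))) *
        ∏ i ∈ α.support, A (Finsupp.single i 1) ^ α i := by
  intro α hα
  rw [stmt5_general A hrec hα, cast_multinomial_eq_div]; rfl
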